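/- Let P be a normal logic program and X ∈ {E,A}, and let χ ∈ {HP,EB,EH}. There exists a stableˣ expansion T of τ_χ(P) if and only if there exists a stableˣ expansion T' of τ_χ(gr(P)) such that T'_oga = T_oga. The same holds for τ⁻_HP and stableᴬ expansions. -/

import Mathlib

set_option autoImplicit false

/-! # First-order autoepistemic logic (FO-AEL): syntax -/

structure Sig : Type 1 where
  Func : Type
  Pred : Type
  arF : Func → ℕ
  arP : Pred → ℕ

inductive Term (S : Sig) : Type
  | var : ℕ → Term S
  | func : (f : S.Func) → (Fin (S.arF f) → Term S) → Term S

inductive Formula (S : Sig) : Type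
  | atom : (p : S.Pred) → (Fin (S.arP p) → Term S) → Formula S
  | eq : Term S → Term S → Formula S
  | not : Formula S → Formula S
  | and : Formula S → Formula S → Formula S
  | ex : ℕ → Formula S → Formula S
  | box : Formula S → Formula S

namespace Term

variable {S : Sig}

/-- A term is ground if it contains no variables; ground terms are the *names*. -/
def isGround : Term S → Prop
  | var _ => False
  | func _ ts => ∀ i, (ts i).isGround

def hasVar (x : ℕ) : Term S → Prop
  | var y => y = x
  | func _ ts => ∃ i, (ts i).hasVar x

/-- Application of a partial (name) substitution to a term. -/
def subst (β : ℕ → Option (Term S)) : Term S → Term S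
  | var x => (β x).getD (var x)
  | func f ts => func f (fun i => (ts i).subst β)

/-- The function symbols occurring in a term. -/
def funcs : Term S → Set S.Func
  | var _ => ∅
  | func f ts => insert f (⋃ i, (ts i).funcs)

/-- `t` is a name (ground term) over the set `F` of function symbols. -/
def isNameOf (F : Set S.Func) : Term S → Prop
  | var _ => False
  | func f ts => f ∈ F ∧ ∀ i, (ts i).isNameOf F

end Term

namespace Formula

variable {S : Sig}

/-- A formula is objective if it is 𝖫-free. -/
def isObjective : Formula S → Prop
  | atom _ _ => True
  | eq _ _ => True
  | not φ => φ.isObjective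
  | and φ ψ => φ.isObjective ∧ ψ.isObjective
  | ex _ φ => φ.isObjective
  | box _ => False

def isGround : Formula S → Prop
  | atom _ ts => ∀ i, (ts i).isGround
  | eq t₁ t₂ => t₁.isGround ∧ t₂.isGround
  | not φ => φ.isGround
  | and φ ψ => φ.isGround ∧ ψ.isGround
  | ex _ _ => False
  | box φ => φ.isGround

def isAtomic : Formula S → Prop
  | atom _ _ => True
  | eq _ _ => True
  | not _ => False
  | and _ _ => False
  | ex _ _ => False
  | box _ => False

/-- The modal operator 𝖫 occurs only applied to (objective) atomic formulas. -/
def boxAtomic : Formula S → Prop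
  | atom _ _ => True
  | eq _ _ => True
  | not φ => φ.boxAtomic
  | and φ ψ => φ.boxAtomic ∧ ψ.boxAtomic
  | ex _ φ => φ.boxAtomic
  | box φ => φ.isAtomic

/-- Propositional formulas: built from 0-ary predicates only. -/
def isPropositional : Formula S → Prop
  | atom p _ => S.arP p = 0
  | eq _ _ => False
  | not φ => φ.isPropositional
  | and φ ψ => φ.isPropositional ∧ ψ.isPropositional
  | ex _ _ => False
  | box _ => False

def freeIn (x : ℕ) : Formula S → Prop
  | atom _ ts => ∃ i, (ts i).hasVar x
  | eq t₁ t₂ => t₁.hasVar x ∨ t₂.hasVar x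
  | not φ => φ.freeIn x
  | and φ ψ => φ.freeIn x ∨ ψ.freeIn x
  | ex y φ => x ≠ y ∧ φ.freeIn x
  | box φ => φ.freeIn x

/-- A formula is closed (a sentence) if it has no free variables. -/
def closed (φ : Formula S) : Prop := ∀ x, ¬ φ.freeIn x

/-- Capture-avoiding application of a partial name substitution (values are ground). -/
def subst (β : ℕ → Option (Term S)) : Formula S → Formula S
  | atom p ts => atom p (fun i => (ts i).subst β)
  | eq t₁ t₂ => eq (t₁.subst β) (t₂.subst β)
  | not φ => not (φ.subst β)
  | and φ ψ => and (φ.subst β) (ψ.subst β)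
  | ex y φ => ex y (φ.subst (fun z => if z = y then none else β z))
  | box φ => box (φ.subst β)

def funcs : Formula S → Set S.Func
  | atom _ ts => ⋃ i, (ts i).funcs
  | eq t₁ t₂ => t₁.funcs ∪ t₂.funcs
  | not φ => φ.funcs
  | and φ ψ => φ.funcs ∪ ψ.funcs
  | ex _ φ => φ.funcs
  | box φ => φ.funcs

def preds : Formula S → Set S.Pred
  | atom p _ => {p}
  | eq _ _ => ∅
  | not φ => φ.preds
  | and φ ψ => φ.preds ∪ ψ.preds
  | ex _ φ => φ.preds
  | box φ => φ.preds

/-- `φ ∨ ψ` as an abbreviation: `¬(¬φ ∧ ¬ψ)`. -/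
def or (φ ψ : Formula S) : Formula S := not (and (not φ) (not ψ))

/-- `φ ⊃ ψ` as an abbreviation: `¬(φ ∧ ¬ψ)`. -/
def imp (φ ψ : Formula S) : Formula S := not (and φ (not ψ))

/-- `∀x.φ` as an abbreviation: `¬∃x.¬φ`. -/
def all (x : ℕ) (φ : Formula S) : Formula S := not (ex x (not φ))

end Formula

/-! ## Semantics -/

structure Interp (S : Sig) where
  U : Type
  nonempty : Nonempty U
  interpF : (f : S.Func) → (Fin (S.arF f) → U) → U
  interpP : (p : S.Pred) → (Fin (S.arP p) → U) → Prop

noncomputable def Interp.dflt {S : Sig} (w : Interp S) : w.U := Classical.choice w.nonempty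

def Term.eval {S : Sig} (w : Interp S) (B : ℕ → w.U) : Term S → w.U
  | Term.var x => B x
  | Term.func f ts => w.interpF f (fun i => (ts i).eval w B)

/-- Evaluation of a ground term (the assignment is irrelevant). -/
noncomputable def Term.evalG {S : Sig} (w : Interp S) (t : Term S) : w.U :=
  t.eval w (fun _ => w.dflt)

/-- An individual is named if some name (ground term) denotes it. -/
def IsNamed {S : Sig} (w : Interp S) (k : w.U) : Prop :=
  ∃ t : Term S, t.isGround ∧ Term.evalG w t = k

/-- A name substitution `β` is associated with the variable assignment `B`:
its domain is exactly the set of variables whose `B`-value is named, and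
it assigns to each such variable a name denoting its `B`-value. -/
def Assoc {S : Sig} (w : Interp S) (B : ℕ → w.U) (β : ℕ → Option (Term S)) : Prop :=
  ∀ x : ℕ,
    (IsNamed w (B x) → (β x).isSome) ∧
    (∀ t : Term S, β x = some t → t.isGround ∧ Term.evalG w t = B x)

/-- The two semantics: any-name (E) and all-name (A). -/
inductive Sem : Type
  | any
  | all

/-- Satisfaction of a formula in an autoepistemic interpretation `⟨w,Γ⟩`
under a variable assignment, for the any-name (E) resp. all-name (A) semantics. -/
def Sat {S : Sig} (X : Sem) (w : Interp S) (Γ : Set (Formula S)) :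
    Formula S → (ℕ → w.U) → Prop
  | Formula.atom p ts, B => w.interpP p (fun i => (ts i).eval w B)
  | Formula.eq t₁ t₂, B => t₁.eval w B = t₂.eval w B
  | Formula.not φ, B => ¬ Sat X w Γ φ B
  | Formula.and φ ψ, B => Sat X w Γ φ B ∧ Sat X w Γ ψ B
  | Formula.ex x φ, B => ∃ u : w.U, Sat X w Γ φ (Function.update B x u)
  | Formula.box φ, B =>
      match X with
      | Sem.any => ∃ β, Assoc w B β ∧ (φ.subst β).closed ∧ φ.subst β ∈ Γ
      | Sem.all => ∀ β, Assoc w B β → (φ.subst β).closed ∧ φ.subst β ∈ Γ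

def ModelsF {S : Sig} (X : Sem) (w : Interp S) (Γ : Set (Formula S)) (φ : Formula S) : Prop :=
  ∀ B : ℕ → w.U, Sat X w Γ φ B

def ModelsT {S : Sig} (X : Sem) (w : Interp S) (Γ Φ : Set (Formula S)) : Prop :=
  ∀ φ ∈ Φ, ModelsF X w Γ φ

/-- `Φ ⊨ˣ_Γ φ`. -/
def Entails {S : Sig} (X : Sem) (Φ Γ : Set (Formula S)) (φ : Formula S) : Prop :=
  ∀ w : Interp S, ModelsT X w Γ Φ → ModelsF X w Γ φ

/-- The standard names assumption: all names are interpreted distinctly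
and every individual is named. -/
def SNA {S : Sig} (w : Interp S) : Prop :=
  (∀ t₁ t₂ : Term S, t₁.isGround → t₂.isGround → Term.evalG w t₁ = Term.evalG w t₂ → t₁ = t₂) ∧
  (∀ k : w.U, IsNamed w k)

/-- Entailment restricted to interpretations satisfying the standard names assumption. -/
def EntailsSN {S : Sig} (X : Sem) (Φ Γ : Set (Formula S)) (φ : Formula S) : Prop :=
  ∀ w : Interp S, SNA w → ModelsT X w Γ Φ → ModelsF X w Γ φ

/-- `T` is a stableˣ expansion of `Φ`. -/
def StableExp {S : Sig} (X : Sem) (Φ T : Set (Formula S)) : Prop :=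
  T = {φ | Entails X Φ T φ}

def objOf {S : Sig} (T : Set (Formula S)) : Set (Formula S) :=
  {φ ∈ T | φ.isObjective}

def ogOf {S : Sig} (T : Set (Formula S)) : Set (Formula S) :=
  {φ ∈ T | φ.isObjective ∧ φ.isGround}

def ogaOf {S : Sig} (T : Set (Formula S)) : Set (Formula S) :=
  {φ ∈ T | φ.isObjective ∧ φ.isGround ∧ φ.isAtomic}

def Consistent {S : Sig} (T : Set (Formula S)) : Prop := T ≠ Set.univ

/-- `Φ₁ ≡ˣ Φ₂`: same stableˣ expansions. -/
def ExpEquiv {S : Sig} (X : Sem) (Φ₁ Φ₂ : Set (Formula S)) : Prop :=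
  ∀ T, StableExp X Φ₁ T ↔ StableExp X Φ₂ T

/-- `Φ₁ ≡ˣ_γ Φ₂` for a selector `sel` (e.g. `ogaOf`): the stableˣ expansions
correspond with respect to `sel`. -/
def ExpEquivSel {S : Sig} (X : Sem) (sel : Set (Formula S) → Set (Formula S))
    (Φ₁ Φ₂ : Set (Formula S)) : Prop :=
  (∀ T, StableExp X Φ₁ T → ∃ T', StableExp X Φ₂ T' ∧ sel T = sel T') ∧
  (∀ T', StableExp X Φ₂ T' → ∃ T, StableExp X Φ₁ T ∧ sel T = sel T')

/-- Autoepistemicˣ consequences of `Φ`. -/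
def Cn {S : Sig} (X : Sem) (Φ : Set (Formula S)) : Set (Formula S) :=
  {φ | ∀ T, StableExp X Φ T → φ ∈ T}

def CnO {S : Sig} (X : Sem) (Φ : Set (Formula S)) : Set (Formula S) :=
  {φ ∈ Cn X Φ | φ.isObjective}

def CnOg {S : Sig} (X : Sem) (Φ : Set (Formula S)) : Set (Formula S) :=
  {φ ∈ Cn X Φ | φ.isObjective ∧ φ.isGround}

/-! ## Logic programs -/

structure PAtom (S : Sig) where
  p : S.Pred
  args : Fin (S.arP p) → Term S

namespace PAtom

variable {S : Sig}

def toFormula (a : PAtom S) : Formula S := Formula.atom a.p a.args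

def isGround (a : PAtom S) : Prop := ∀ i, (a.args i).isGround

def hasVar (x : ℕ) (a : PAtom S) : Prop := ∃ i, (a.args i).hasVar x

def substA (σ : ℕ → Term S) (a : PAtom S) : PAtom S :=
  ⟨a.p, fun i => (a.args i).subst (fun x => some (σ x))⟩

def funcs (a : PAtom S) : Set S.Func := ⋃ i, (a.args i).funcs

end PAtom

/-- A (disjunctive) rule `h₁ | … | h_l ← b₁,…,b_m, not c₁,…,not c_n`,
together with a list of the variables occurring in it. -/
structure Rule (S : Sig) where
  head : List (PAtom S)
  pos : List (PAtom S)
  neg : List (PAtom S)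
  vars : List ℕ

namespace Rule

variable {S : Sig}

def atoms (r : Rule S) : List (PAtom S) := r.head ++ r.pos ++ r.neg

def hasVar (x : ℕ) (r : Rule S) : Prop := ∃ a ∈ r.atoms, PAtom.hasVar x a

/-- Well-formedness: at least one head atom, and `vars` lists all variables of the rule. -/
def wf (r : Rule S) : Prop := r.head ≠ [] ∧ ∀ x, r.hasVar x → x ∈ r.vars

def isNormal (r : Rule S) : Prop := r.head.length = 1

def isGround (r : Rule S) : Prop := (∀ a ∈ r.atoms, a.isGround) ∧ r.vars = []

def isSafe (r : Rule S) : Prop := ∀ x, r.hasVar x → ∃ a ∈ r.pos, PAtom.hasVar x a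

def isPositive (r : Rule S) : Prop := r.neg = []

def applySubst (σ : ℕ → Term S) (r : Rule S) : Rule S :=
  ⟨r.head.map (PAtom.substA σ), r.pos.map (PAtom.substA σ), r.neg.map (PAtom.substA σ), []⟩

end Rule

abbrev Program (S : Sig) := Set (Rule S)

def progWf {S : Sig} (P : Program S) : Prop := ∀ r ∈ P, r.wf
def progNormal {S : Sig} (P : Program S) : Prop := ∀ r ∈ P, r.isNormal
def progGround {S : Sig} (P : Program S) : Prop := ∀ r ∈ P, r.isGround
def progSafe {S : Sig} (P : Program S) : Prop := ∀ r ∈ P, r.isSafe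
def progPositive {S : Sig} (P : Program S) : Prop := ∀ r ∈ P, r.isPositive

/-- The function symbols occurring in `P` (part of the signature `Σ_P`). -/
def progFuncs {S : Sig} (P : Program S) : Set S.Func :=
  {f | ∃ r ∈ P, ∃ a ∈ r.atoms, f ∈ a.funcs}

/-- The predicate symbols occurring in `P` (part of the signature `Σ_P`). -/
def progPreds {S : Sig} (P : Program S) : Set S.Pred :=
  {q | ∃ r ∈ P, ∃ a ∈ r.atoms, a.p = q}

/-- The ambient signature is exactly the signature `Σ_P` of `P`. -/
def fullSig {S : Sig} (P : Program S) : Prop :=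
  (∀ f : S.Func, f ∈ progFuncs P) ∧ (∀ q : S.Pred, q ∈ progPreds P)

/-- Standing assumption: `Σ_P` contains a 0-ary function symbol whenever it
has a predicate symbol of arity greater than 0. -/
def goodSig {S : Sig} (P : Program S) : Prop :=
  (∃ q ∈ progPreds P, 0 < S.arP q) → ∃ f ∈ progFuncs P, S.arF f = 0

/-! ## Embeddings of logic programs into FO-AEL -/

def andAll {S : Sig} : Formula S → List (Formula S) → Formula S
  | φ, [] => φ
  | φ, ψ :: rest => andAll (Formula.and φ ψ) rest

def orAll {S : Sig} : Formula S → List (Formula S) → Formula S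
  | φ, [] => φ
  | φ, ψ :: rest => orAll (Formula.or φ ψ) rest

/-- `impOf ants c` is `⋀ ants ⊃ c` (just `c` if there are no antecedents). -/
def impOf {S : Sig} : List (Formula S) → Formula S → Formula S
  | [], c => c
  | a :: rest, c => Formula.imp (andAll a rest) c

/-- Disjunction of a nonempty list (junk value on the empty list,
which is excluded by rule well-formedness). -/
def disjOf {S : Sig} : List (Formula S) → Formula S
  | [] => Formula.eq (Term.var 0) (Term.var 0)
  | h :: rest => orAll h rest

/-- Universal uclosure over the listed variables. -/
def uclosure {S : Sig} (vs : List ℕ) (φ : Formula S) : Formula S :=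
  vs.foldr Formula.all φ

def bodyHP {S : Sig} (r : Rule S) : List (Formula S) :=
  r.pos.map PAtom.toFormula ++ r.neg.map (fun c => Formula.not (Formula.box c.toFormula))

def bodyE {S : Sig} (r : Rule S) : List (Formula S) :=
  r.pos.map (fun b => Formula.and b.toFormula (Formula.box b.toFormula)) ++
    r.neg.map (fun c => Formula.not (Formula.box c.toFormula))

/-- `τ_HP(r)` resp. `τ^∨_HP(r)`. -/
def embHP {S : Sig} (r : Rule S) : Formula S :=
  uclosure r.vars (impOf (bodyHP r) (disjOf (r.head.map PAtom.toFormula)))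

/-- `τ_EB(r)` resp. `τ^∨_EB(r)`. -/
def embEB {S : Sig} (r : Rule S) : Formula S :=
  uclosure r.vars (impOf (bodyE r) (disjOf (r.head.map PAtom.toFormula)))

/-- `τ_EH(r)` resp. `τ^∨_EH(r)`. -/
def embEH {S : Sig} (r : Rule S) : Formula S :=
  uclosure r.vars (impOf (bodyE r)
    (disjOf (r.head.map (fun h => Formula.and h.toFormula (Formula.box h.toFormula)))))

/-- The unique-names axioms `¬𝖫(t₁=t₂) ⊃ t₁≠t₂` for distinct names of `Σ_P`. -/
def UNAax {S : Sig} (P : Program S) : Set (Formula S) :=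
  {φ | ∃ t₁ t₂ : Term S, t₁.isNameOf (progFuncs P) ∧ t₂.isNameOf (progFuncs P) ∧ t₁ ≠ t₂ ∧
        φ = Formula.imp (Formula.not (Formula.box (Formula.eq t₁ t₂)))
              (Formula.not (Formula.eq t₁ t₂))}

/-- The positive introspection axioms `α ⊃ 𝖫α` for objective ground atoms of `Σ_P`. -/
def PIAax {S : Sig} (P : Program S) : Set (Formula S) :=
  {φ | ∃ a : PAtom S, a.p ∈ progPreds P ∧ (∀ i, (a.args i).isNameOf (progFuncs P)) ∧
        φ = Formula.imp a.toFormula (Formula.box a.toFormula)}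

def ruleEmb {S : Sig} (emb : Rule S → Formula S) (P : Program S) : Set (Formula S) :=
  {φ | ∃ r ∈ P, φ = emb r}

def tauHP {S : Sig} (P : Program S) : Set (Formula S) := ruleEmb embHP P ∪ UNAax P
def tauEB {S : Sig} (P : Program S) : Set (Formula S) := ruleEmb embEB P ∪ UNAax P
def tauEH {S : Sig} (P : Program S) : Set (Formula S) := ruleEmb embEH P ∪ UNAax P
def tauHPv {S : Sig} (P : Program S) : Set (Formula S) := ruleEmb embHP P ∪ PIAax P ∪ UNAax P
def tauEBv {S : Sig} (P : Program S) : Set (Formula S) := ruleEmb embEB P ∪ PIAax P ∪ UNAax P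
def tauEHv {S : Sig} (P : Program S) : Set (Formula S) := ruleEmb embEH P ∪ UNAax P
def tauHPminus {S : Sig} (P : Program S) : Set (Formula S) := ruleEmb embHP P
def tauEHvminus {S : Sig} (P : Program S) : Set (Formula S) := ruleEmb embEH P

/-! ## Grounding and stable models -/

/-- The grounding of `P`: all ground instantiations of rules of `P`
obtained by replacing variables with names of `Σ_P`. -/
def grP {S : Sig} (P : Program S) : Program S :=
  {r' | ∃ r ∈ P, ∃ σ : ℕ → Term S,
        (∀ x, r.hasVar x → (σ x).isNameOf (progFuncs P)) ∧ r' = Rule.applySubst σ r}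

/-- A Herbrand interpretation: a set of ground atomic formulas. -/
def HerbrandI {S : Sig} (M : Set (Formula S)) : Prop :=
  ∀ φ ∈ M, φ.isAtomic ∧ φ.isGround

/-- `M` is a Herbrand model of the positive ground program `Q` (relative to the
names of `Σ_P`): rules are satisfied and `t = t ∈ M` for every name `t`. -/
def HerbrandModelOf {S : Sig} (P Q : Program S) (M : Set (Formula S)) : Prop :=
  HerbrandI M ∧
  (∀ r ∈ Q, (∀ b ∈ r.pos, PAtom.toFormula b ∈ M) → ∃ h ∈ r.head, PAtom.toFormula h ∈ M) ∧
  (∀ t : Term S, t.isNameOf (progFuncs P) → Formula.eq t t ∈ M)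

/-- The Gelfond–Lifschitz reduct of `gr(P)` with respect to `M`. -/
def reduct {S : Sig} (P : Program S) (M : Set (Formula S)) : Program S :=
  {r' | ∃ r ∈ grP P, (∀ c ∈ r.neg, PAtom.toFormula c ∉ M) ∧
        r' = ⟨r.head, r.pos, [], r.vars⟩}

/-- `M` is a stable model of `P`: a minimal Herbrand model of the reduct of `gr(P)` w.r.t. `M`. -/
def isStableModel {S : Sig} (P : Program S) (M : Set (Formula S)) : Prop :=
  HerbrandModelOf P (reduct P M) M ∧
  ∀ M', M' ⊆ M → HerbrandModelOf P (reduct P M) M' → M' = M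

/-! ## First-order theories and classes thereof -/

/-- An FO theory: a set of objective sentences. -/
def FOTheory {S : Sig} (Φ : Set (Formula S)) : Prop :=
  ∀ φ ∈ Φ, φ.isObjective ∧ φ.closed

def theoryFuncs {S : Sig} (Φ : Set (Formula S)) : Set S.Func := {f | ∃ φ ∈ Φ, f ∈ φ.funcs}
def theoryPreds {S : Sig} (Φ : Set (Formula S)) : Set S.Pred := {q | ∃ φ ∈ Φ, q ∈ φ.preds}

/-- The ambient signature is exactly the union of the signatures of `Φ` and `P`. -/
def CoverSig {S : Sig} (Φ : Set (Formula S)) (P : Program S) : Prop :=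
  (∀ f : S.Func, f ∈ theoryFuncs Φ ∪ progFuncs P) ∧
  (∀ q : S.Pred, q ∈ theoryPreds Φ ∪ progPreds P)

def exClosure {S : Sig} (ys : List ℕ) (φ : Formula S) : Formula S := ys.foldr Formula.ex φ

/-- A Horn sentence `(∀)(b₁ ∧ … ∧ b_n ⊃ h)` with atomic `b_i`, `h`
(the consequent `h` may be absent). -/
def isHornSentence {S : Sig} (φ : Formula S) : Prop :=
  ∃ (vs : List ℕ) (bs : List (Formula S)),
    (∀ b ∈ bs, b.isAtomic) ∧
    ((∃ h : Formula S, h.isAtomic ∧ φ = uclosure vs (impOf bs h)) ∨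
     (∃ b rest, bs = b :: rest ∧ φ = uclosure vs (Formula.not (andAll b rest))))

def HornTheory {S : Sig} (Φ : Set (Formula S)) : Prop :=
  FOTheory Φ ∧ ∀ φ ∈ Φ, isHornSentence φ

/-- A generalized Horn sentence `(∀)(b₁ ∧ … ∧ b_n ⊃ ∃ȳ.h)` with atomic `b_i`, `h`,
the variables `ȳ` occurring only in `h` (the consequent may be absent). -/
def isGHornSentence {S : Sig} (φ : Formula S) : Prop :=
  ∃ (vs : List ℕ) (bs : List (Formula S)),
    (∀ b ∈ bs, b.isAtomic) ∧
    ((∃ (ys : List ℕ) (h : Formula S), h.isAtomic ∧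
        (∀ y ∈ ys, ∀ b ∈ bs, ¬ b.freeIn y) ∧
        φ = uclosure vs (impOf bs (exClosure ys h))) ∨
     (∃ b rest, bs = b :: rest ∧ φ = uclosure vs (Formula.not (andAll b rest))))

def GHornTheory {S : Sig} (Φ : Set (Formula S)) : Prop :=
  FOTheory Φ ∧ ∀ φ ∈ Φ, isGHornSentence φ

def PropTheory {S : Sig} (Φ : Set (Formula S)) : Prop :=
  FOTheory Φ ∧ ∀ φ ∈ Φ, φ.isPropositional

namespace Aux

variable {S : Sig}

theorem ground_iff (t : Term S) : t.isGround ↔ ∀ x, ¬ t.hasVar x := by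
  induction t with
  | var y => simp [Term.isGround, Term.hasVar]
  | func f ts ih =>
    simp only [Term.isGround, Term.hasVar, not_exists]
    constructor
    · intro h x i
      exact (ih i).1 (h i) x
    · intro h i
      exact (ih i).2 (fun x => h x i)

theorem eval_congr (w : Interp S) (t : Term S) (B B' : ℕ → w.U)
    (h : ∀ x, t.hasVar x → B x = B' x) : t.eval w B = t.eval w B' := by
  induction t with
  | var y => exact h y rfl
  | func f ts ih =>
    simp only [Term.eval]
    congr 1
    funext i
    exact ih i (fun x hx => h x ⟨i, hx⟩)

theorem eval_ground (w : Interp S) (t : Term S) (ht : t.isGround) (B : ℕ → w.U) :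
    t.eval w B = Term.evalG w t :=
  eval_congr w t _ _ (fun x hx => absurd hx ((ground_iff t).1 ht x))

theorem subst_congr (t : Term S) (β β' : ℕ → Option (Term S))
    (h : ∀ x, t.hasVar x → β x = β' x) : t.subst β = t.subst β' := by
  induction t with
  | var y => simp only [Term.subst]; rw [h y rfl]
  | func f ts ih =>
    simp only [Term.subst]
    congr 1
    funext i
    exact ih i (fun x hx => h x ⟨i, hx⟩)

theorem subst_id (t : Term S) : t.subst (fun _ => none) = t := by
  induction t with
  | var y => rfl
  | func f ts ih =>
    simp only [Term.subst]
    congr 1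
    funext i
    exact ih i

theorem subst_ground (t : Term S) (ht : t.isGround) (β : ℕ → Option (Term S)) :
    t.subst β = t := by
  rw [subst_congr t β (fun _ => none) (fun x hx => absurd hx ((ground_iff t).1 ht x))]
  exact subst_id t

/-- the value of a substituted term -/
theorem eval_subst (w : Interp S) (t : Term S) (β : ℕ → Option (Term S)) (B : ℕ → w.U) :
    (t.subst β).eval w B = t.eval w (fun x => ((β x).getD (Term.var x)).eval w B) := by
  induction t with
  | var y => rfl
  | func f ts ih =>
    simp only [Term.subst, Term.eval]
    congr 1
    funext i
    exact ih i

theorem subst_hasVar (t : Term S) (β : ℕ → Option (Term S))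
    (hβ : ∀ x s, β x = some s → s.isGround) (x : ℕ) :
    (t.subst β).hasVar x ↔ t.hasVar x ∧ β x = none := by
  induction t with
  | var y =>
    simp only [Term.subst, Term.hasVar]
    cases hy : β y with
    | none =>
      simp only [Option.getD, Term.hasVar]
      constructor
      · rintro rfl; exact ⟨rfl, hy⟩
      · exact fun h => h.1
    | some s =>
      simp only [Option.getD]
      constructor
      · intro h; exact absurd h ((ground_iff s).1 (hβ y s hy) x)
      · rintro ⟨rfl, h⟩; rw [hy] at h; cases h
  | func f ts ih =>
    simp only [Term.subst, Term.hasVar, ih]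
    constructor
    · rintro ⟨i, h1, h2⟩; exact ⟨⟨i, h1⟩, h2⟩
    · rintro ⟨⟨i, h1⟩, h2⟩; exact ⟨i, h1, h2⟩

theorem isNameOf_ground (F : Set S.Func) (t : Term S) (h : t.isNameOf F) : t.isGround := by
  induction t with
  | var y => exact h
  | func f ts ih => exact fun i => ih i (h.2 i)

theorem ground_isNameOf (F : Set S.Func) (hF : ∀ f, f ∈ F) (t : Term S) (h : t.isGround) :
    t.isNameOf F := by
  induction t with
  | var y => exact h
  | func f ts ih => exact ⟨hF f, fun i => ih i (h i)⟩

/-! ### Existence of an expansion for a class of interpretations -/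

def depth : Formula S → ℕ
  | Formula.atom _ _ => 0
  | Formula.eq _ _ => 0
  | Formula.not φ => depth φ
  | Formula.and φ ψ => max (depth φ) (depth ψ)
  | Formula.ex _ φ => depth φ
  | Formula.box φ => depth φ + 1

theorem depth_subst (φ : Formula S) : ∀ β : ℕ → Option (Term S), depth (φ.subst β) = depth φ := by
  induction φ with
  | atom p ts => intro β; rfl
  | eq a b => intro β; rfl
  | not φ ih => intro β; exact ih β
  | and φ ψ ih1 ih2 => intro β; simp only [Formula.subst, depth, ih1, ih2]
  | ex y φ ih => intro β; exact ih _
  | box φ ih => intro β; simp only [Formula.subst, depth, ih]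

theorem sat_congr (X : Sem) (w : Interp S) (Γ Γ' : Set (Formula S)) (n : ℕ)
    (h : ∀ ψ : Formula S, depth ψ < n → (ψ ∈ Γ ↔ ψ ∈ Γ')) (φ : Formula S) :
    depth φ ≤ n → ∀ B, (Sat X w Γ φ B ↔ Sat X w Γ' φ B) := by
  induction φ with
  | atom p ts => intro _ B; exact Iff.rfl
  | eq a b => intro _ B; exact Iff.rfl
  | not φ ih => intro hd B; exact not_congr (ih hd B)
  | and φ ψ ih1 ih2 =>
    intro hd B
    simp only [depth, max_le_iff] at hd
    exact and_congr (ih1 hd.1 B) (ih2 hd.2 B)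
  | ex y φ ih => intro hd B; exact exists_congr (fun u => ih hd _)
  | box φ ih =>
    intro hd B
    have hm : ∀ β, (φ.subst β ∈ Γ ↔ φ.subst β ∈ Γ') := fun β => h _ (by
      rw [depth_subst]; exact hd)
    cases X <;> simp only [Sat, hm]

def lev (X : Sem) (W : Interp S → Prop) : ℕ → Set (Formula S)
  | 0 => ∅
  | n + 1 => {φ | ∀ w, W w → ModelsF X w (lev X W n) φ}

theorem lev_stab (X : Sem) (W : Interp S → Prop) (n : ℕ) :
    ∀ ψ : Formula S, depth ψ < n → (ψ ∈ lev X W n ↔ ψ ∈ lev X W (depth ψ + 1)) := by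
  induction n using Nat.strong_induction_on with
  | _ n ih =>
    intro ψ hψ
    obtain ⟨m, rfl⟩ : ∃ m, n = m + 1 := ⟨n - 1, by omega⟩
    have hag : ∀ χ : Formula S, depth χ < depth ψ →
        (χ ∈ lev X W m ↔ χ ∈ lev X W (depth ψ)) := fun χ hχ =>
      (ih m (by omega) χ (by omega)).trans (ih (depth ψ) hψ χ hχ).symm
    simp only [lev, Set.mem_setOf_eq, ModelsF]
    refine forall_congr' fun w => forall_congr' fun _ => forall_congr' fun B => ?_
    exact sat_congr X w _ _ _ hag ψ le_rfl B

theorem exists_fix (X : Sem) (W : Interp S → Prop) :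
    ∃ T : Set (Formula S), T = {φ | ∀ w, W w → ModelsF X w T φ} := by
  refine ⟨{φ | φ ∈ lev X W (depth φ + 1)}, ?_⟩
  ext φ
  simp only [Set.mem_setOf_eq, ModelsF]
  change (∀ w, W w → ModelsF X w (lev X W (depth φ)) φ) ↔ _
  simp only [ModelsF]
  refine forall_congr' fun w => forall_congr' fun _ => forall_congr' fun B => ?_
  exact sat_congr X w _ _ _ (fun ψ hψ => lev_stab X W _ ψ hψ) φ le_rfl B

theorem sat_objective (X : Sem) (w : Interp S) (Γ Γ' : Set (Formula S)) (φ : Formula S)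
    (h : φ.isAtomic) (B : ℕ → w.U) : Sat X w Γ φ B ↔ Sat X w Γ' φ B := by
  cases φ <;> first | exact Iff.rfl | exact h.elim

/-- Transfer principle. -/
theorem transfer (X : Sem) (Φ₁ Φ₂ T : Set (Formula S)) (hT : StableExp X Φ₁ T)
    (h₂ : ∀ (w : Interp S) T', ogaOf T' = ogaOf T → (ModelsT X w T' Φ₂ ↔ ModelsT X w T Φ₂))
    (hE : ∀ φ : Formula S, φ.isGround → φ.isAtomic → (Entails X Φ₁ T φ ↔ Entails X Φ₂ T φ)) :
    ∃ T', StableExp X Φ₂ T' ∧ ogaOf T' = ogaOf T := by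
  obtain ⟨T', hT'⟩ := exists_fix X (fun w => ModelsT X w T Φ₂)
  have hmem : ∀ φ, φ ∈ T' ↔ ∀ w, ModelsT X w T Φ₂ → ModelsF X w T' φ := fun φ => by
    conv_lhs => rw [hT']
    exact Iff.rfl
  have hmemT : ∀ φ, φ ∈ T ↔ Entails X Φ₁ T φ := fun φ => by
    conv_lhs => rw [hT]
    exact Iff.rfl
  have hoga : ogaOf T' = ogaOf T := by
    ext φ
    simp only [ogaOf, Set.mem_setOf_eq]
    refine and_congr_left ?_
    rintro ⟨_, hg, ha⟩
    rw [hmem, hmemT, hE φ hg ha]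
    refine forall_congr' fun w => forall_congr' fun _ => forall_congr' fun B => ?_
    exact sat_objective X w _ _ φ ha B
  refine ⟨T', ?_, hoga⟩
  unfold StableExp
  ext φ
  rw [hmem]
  refine forall_congr' fun w => ?_
  rw [h₂ w T' hoga]

/-! ### Semantic characterisation of the embeddings -/

theorem models_uclosure (X : Sem) (w : Interp S) (Γ : Set (Formula S)) (vs : List ℕ)
    (φ : Formula S) : ModelsF X w Γ (uclosure vs φ) ↔ ModelsF X w Γ φ := by
  induction vs with
  | nil => exact Iff.rfl
  | cons v vs ih =>
    rw [← ih]
    change (∀ B, Sat X w Γ (Formula.all v (uclosure vs φ)) B) ↔ _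
    simp only [Formula.all, Sat, not_exists, not_not]
    constructor
    · intro h B
      have := h B (B v)
      rwa [Function.update_eq_self] at this
    · intro h B u
      exact h _

theorem sat_andAll (X : Sem) (w : Interp S) (Γ : Set (Formula S)) (l : List (Formula S))
    (B : ℕ → w.U) : ∀ φ, Sat X w Γ (andAll φ l) B ↔ Sat X w Γ φ B ∧ ∀ ψ ∈ l, Sat X w Γ ψ B := by
  induction l with
  | nil => intro φ; simp [andAll]
  | cons a l ih => intro φ; simp only [andAll, ih, Sat, List.forall_mem_cons]; tauto

theorem sat_impOf (X : Sem) (w : Interp S) (Γ : Set (Formula S)) (l : List (Formula S))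
    (c : Formula S) (B : ℕ → w.U) :
    Sat X w Γ (impOf l c) B ↔ ((∀ ψ ∈ l, Sat X w Γ ψ B) → Sat X w Γ c B) := by
  cases l with
  | nil => simp [impOf]
  | cons a l =>
    simp only [impOf, Formula.imp, Sat, sat_andAll, List.forall_mem_cons]
    tauto

def aT (w : Interp S) (a : PAtom S) (B : ℕ → w.U) : Prop :=
  w.interpP a.p (fun i => (a.args i).eval w B)

def bT (X : Sem) (w : Interp S) (Γ : Set (Formula S)) (a : PAtom S) (B : ℕ → w.U) : Prop :=
  Sat X w Γ (Formula.box a.toFormula) B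

def RSat (X : Sem) (w : Interp S) (Γ : Set (Formula S)) (kp kh : Prop) (r : Rule S)
    (B : ℕ → w.U) : Prop :=
  (∀ b ∈ r.pos, aT w b B ∧ (kp → bT X w Γ b B)) → (∀ c ∈ r.neg, ¬ bT X w Γ c B) →
    ∀ h ∈ r.head, aT w h B ∧ (kh → bT X w Γ h B)

def EmbOK (emb : Rule S → Formula S) (kp kh : Prop) : Prop :=
  ∀ (X : Sem) (w : Interp S) (Γ : Set (Formula S)) (r : Rule S), r.isNormal →
    (ModelsF X w Γ (emb r) ↔ ∀ B, RSat X w Γ kp kh r B)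

theorem embOK_HP : EmbOK (S := S) embHP False False := by
  intro X w Γ r hr
  obtain ⟨h, hh⟩ := List.length_eq_one_iff.1 hr
  unfold embHP
  rw [models_uclosure]
  refine forall_congr' fun B => ?_
  rw [sat_impOf]
  simp only [bodyHP, List.forall_mem_append, List.forall_mem_map, hh, List.map, disjOf, orAll,
    RSat, List.mem_singleton, forall_eq, false_imp_iff, and_true]
  exact and_imp

theorem embOK_EB : EmbOK (S := S) embEB True False := by
  intro X w Γ r hr
  obtain ⟨h, hh⟩ := List.length_eq_one_iff.1 hr
  unfold embEB
  rw [models_uclosure]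
  refine forall_congr' fun B => ?_
  rw [sat_impOf]
  simp only [bodyE, List.forall_mem_append, List.forall_mem_map, hh, List.map, disjOf, orAll,
    RSat, List.mem_singleton, forall_eq, false_imp_iff, and_true, true_imp_iff]
  exact and_imp

theorem embOK_EH : EmbOK (S := S) embEH True True := by
  intro X w Γ r hr
  obtain ⟨h, hh⟩ := List.length_eq_one_iff.1 hr
  unfold embEH
  rw [models_uclosure]
  refine forall_congr' fun B => ?_
  rw [sat_impOf]
  simp only [bodyE, List.forall_mem_append, List.forall_mem_map, hh, List.map, disjOf, orAll,
    RSat, List.mem_singleton, forall_eq, true_imp_iff]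
  exact and_imp

/-! ### Associated substitutions -/

open Classical in
theorem exists_assoc (w : Interp S) (B : ℕ → w.U) (σ : ℕ → Term S)
    : ∃ β, Assoc w B β ∧
      ∀ x, (σ x).isGround → Term.evalG w (σ x) = B x → β x = some (σ x) := by
  refine ⟨fun x => if (σ x).isGround ∧ Term.evalG w (σ x) = B x then some (σ x) else
    if h : IsNamed w (B x) then some h.choose else none, ?_, ?_⟩
  · intro x
    by_cases h1 : (σ x).isGround ∧ Term.evalG w (σ x) = B x
    · simp only [h1, and_self, if_true]
      refine ⟨fun _ => rfl, ?_⟩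
      intro t ht
      cases ht
      exact h1
    · simp only [h1, if_false]
      by_cases h2 : IsNamed w (B x)
      · simp only [h2, dif_pos]
        refine ⟨fun _ => rfl, ?_⟩
        intro t ht
        cases ht
        exact h2.choose_spec
      · simp [h2]
  · intro x h1 h2
    simp [h1, h2]

theorem assoc_ground {w : Interp S} {B : ℕ → w.U} {β : ℕ → Option (Term S)} (h : Assoc w B β)
    (x : ℕ) (s : Term S) (hs : β x = some s) : s.isGround := ((h x).2 s hs).1

theorem assoc_none {w : Interp S} {B : ℕ → w.U} {β : ℕ → Option (Term S)} (h : Assoc w B β)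
    (x : ℕ) : β x = none ↔ ¬ IsNamed w (B x) := by
  constructor
  · intro h1 h2
    have := (h x).1 h2
    rw [h1] at this
    cases this
  · intro h1
    cases hx : β x with
    | none => rfl
    | some s => exact absurd ⟨s, (h x).2 s hx⟩ h1

theorem assoc_eval {w : Interp S} {B : ℕ → w.U} {β : ℕ → Option (Term S)} (h : Assoc w B β)
    (t : Term S) : (t.subst β).eval w B = t.eval w B := by
  rw [eval_subst]
  congr 1
  funext x
  cases hx : β x with
  | none => rfl
  | some s =>
    simp only [Option.getD]
    rw [eval_ground w s (assoc_ground h x s hx), ((h x).2 s hx).2]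

theorem atom_closed (a : PAtom S) : a.toFormula.closed ↔ a.isGround := by
  simp only [PAtom.toFormula, Formula.closed, Formula.freeIn, PAtom.isGround, ground_iff,
    not_exists]
  exact forall_comm

/-- substitution on program atoms -/
def sub (β : ℕ → Option (Term S)) (a : PAtom S) : PAtom S := ⟨a.p, fun i => (a.args i).subst β⟩

theorem toFormula_subst (β : ℕ → Option (Term S)) (a : PAtom S) :
    a.toFormula.subst β = (sub β a).toFormula := rfl

theorem bT_any (w : Interp S) (Γ : Set (Formula S)) (a : PAtom S) (B : ℕ → w.U) :
    bT Sem.any w Γ a B ↔ ∃ β, Assoc w B β ∧ (sub β a).isGround ∧ (sub β a).toFormula ∈ Γ := by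
  simp only [bT, Sat, toFormula_subst, atom_closed]

theorem bT_all (w : Interp S) (Γ : Set (Formula S)) (a : PAtom S) (B : ℕ → w.U) :
    bT Sem.all w Γ a B ↔ ∀ β, Assoc w B β → (sub β a).isGround ∧ (sub β a).toFormula ∈ Γ := by
  simp only [bT, Sat, toFormula_subst, atom_closed]

theorem bT_congr (X : Sem) (w : Interp S) (Γ Γ' : Set (Formula S)) (a : PAtom S) (B : ℕ → w.U)
    (h : ∀ a : PAtom S, a.isGround → (a.toFormula ∈ Γ ↔ a.toFormula ∈ Γ')) :
    bT X w Γ a B ↔ bT X w Γ' a B := by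
  have h' : ∀ a : PAtom S, (a.isGround ∧ a.toFormula ∈ Γ) ↔ (a.isGround ∧ a.toFormula ∈ Γ') :=
    fun a => and_congr_right (h a)
  cases X
  · simp only [bT_any, h']
  · simp only [bT_all, h']

theorem oga_atom {T T' : Set (Formula S)} (h : ogaOf T' = ogaOf T) (a : PAtom S)
    (ha : a.isGround) : a.toFormula ∈ T' ↔ a.toFormula ∈ T := by
  have := Set.ext_iff.1 h a.toFormula
  simp only [ogaOf, Set.mem_setOf_eq] at this
  have h1 : a.toFormula.isObjective ∧ a.toFormula.isGround ∧ a.toFormula.isAtomic :=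
    ⟨trivial, ha, trivial⟩
  simpa [h1] using this

theorem oga_eq {T T' : Set (Formula S)} (h : ogaOf T' = ogaOf T) (t₁ t₂ : Term S)
    (h₁ : t₁.isGround) (h₂ : t₂.isGround) : Formula.eq t₁ t₂ ∈ T' ↔ Formula.eq t₁ t₂ ∈ T := by
  have := Set.ext_iff.1 h (Formula.eq t₁ t₂)
  simp only [ogaOf, Set.mem_setOf_eq] at this
  have h1 : (Formula.eq t₁ t₂).isObjective ∧ (Formula.eq t₁ t₂).isGround ∧
    (Formula.eq t₁ t₂).isAtomic := ⟨trivial, ⟨h₁, h₂⟩, trivial⟩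
  simpa [h1] using this

theorem sub_ground (β : ℕ → Option (Term S)) (a : PAtom S) (ha : a.isGround) : sub β a = a := by
  cases a
  simp only [sub]
  congr 1
  funext i
  exact subst_ground _ (ha i) β

theorem bT_ground (X : Sem) (w : Interp S) (Γ : Set (Formula S)) (a : PAtom S) (B : ℕ → w.U)
    (ha : a.isGround) : bT X w Γ a B ↔ a.toFormula ∈ Γ := by
  obtain ⟨β, hβ, _⟩ := exists_assoc w B Term.var
  cases X
  · rw [bT_any]
    constructor
    · rintro ⟨β, -, -, h⟩
      rwa [sub_ground β a ha] at h
    · intro h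
      refine ⟨β, hβ, ?_⟩
      rw [sub_ground β a ha]
      exact ⟨ha, h⟩
  · rw [bT_all]
    constructor
    · intro h
      have := (h β hβ).2
      rwa [sub_ground β a ha] at this
    · intro h β _
      rw [sub_ground β a ha]
      exact ⟨ha, h⟩

/-! ### Unique names -/

def UNASat (w : Interp S) (Γ : Set (Formula S)) (Q : Program S) : Prop :=
  ∀ t₁ t₂ : Term S, t₁.isNameOf (progFuncs Q) → t₂.isNameOf (progFuncs Q) → t₁ ≠ t₂ →
    Formula.eq t₁ t₂ ∉ Γ → Term.evalG w t₁ ≠ Term.evalG w t₂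

theorem sat_box_eq (X : Sem) (w : Interp S) (Γ : Set (Formula S)) (t₁ t₂ : Term S)
    (h₁ : t₁.isGround) (h₂ : t₂.isGround) (B : ℕ → w.U) :
    Sat X w Γ (Formula.box (Formula.eq t₁ t₂)) B ↔ Formula.eq t₁ t₂ ∈ Γ := by
  have hs : ∀ β, (Formula.eq t₁ t₂).subst β = Formula.eq t₁ t₂ := fun β => by
    simp only [Formula.subst, subst_ground _ h₁, subst_ground _ h₂]
  have hc : (Formula.eq t₁ t₂).closed := by
    intro x hx
    rcases hx with hx | hx
    · exact (ground_iff _).1 h₁ x hx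
    · exact (ground_iff _).1 h₂ x hx
  obtain ⟨β, hβ, _⟩ := exists_assoc w B Term.var
  cases X
  · simp only [Sat, hs]
    exact ⟨fun ⟨_, _, _, h⟩ => h, fun h => ⟨β, hβ, hc, h⟩⟩
  · simp only [Sat, hs]
    exact ⟨fun h => (h β hβ).2, fun h _ _ => ⟨hc, h⟩⟩

theorem models_UNA (X : Sem) (w : Interp S) (Γ : Set (Formula S)) (Q : Program S) :
    ModelsT X w Γ (UNAax Q) ↔ UNASat w Γ Q := by
  have key : ∀ t₁ t₂ : Term S, t₁.isGround → t₂.isGround → ∀ B : ℕ → w.U,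
      (Sat X w Γ (Formula.imp (Formula.not (Formula.box (Formula.eq t₁ t₂)))
              (Formula.not (Formula.eq t₁ t₂))) B ↔
        (Formula.eq t₁ t₂ ∉ Γ → Term.evalG w t₁ ≠ Term.evalG w t₂)) := by
    intro t₁ t₂ h₁ h₂ B
    have := sat_box_eq X w Γ t₁ t₂ h₁ h₂ B
    rw [← eval_ground w t₁ h₁ B, ← eval_ground w t₂ h₂ B, ← this]
    change ¬ (¬ Sat X w Γ (Formula.box (Formula.eq t₁ t₂)) B ∧
      ¬ ¬ (t₁.eval w B = t₂.eval w B)) ↔ _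
    tauto
  constructor
  · intro h t₁ t₂ n₁ n₂ hne
    exact (key t₁ t₂ (isNameOf_ground _ _ n₁) (isNameOf_ground _ _ n₂) (fun _ => w.dflt)).1
      (h _ ⟨t₁, t₂, n₁, n₂, hne, rfl⟩ _)
  · rintro h φ ⟨t₁, t₂, n₁, n₂, hne, rfl⟩ B
    exact (key t₁ t₂ (isNameOf_ground _ _ n₁) (isNameOf_ground _ _ n₂) B).2 (h t₁ t₂ n₁ n₂ hne)

/-- Independence from the choice of names. -/
theorem cong_names (X : Sem) (Φ T : Set (Formula S)) (hT : StableExp X Φ T) (P : Program S)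
    (hfull : ∀ f, f ∈ progFuncs P) (w : Interp S) (hu : UNASat w T P) (B : ℕ → w.U)
    (β β' : ℕ → Option (Term S)) (hβ : Assoc w B β) (hβ' : Assoc w B β') (a : PAtom S)
    (h : (sub β a).isGround ∧ (sub β a).toFormula ∈ T) :
    (sub β' a).isGround ∧ (sub β' a).toFormula ∈ T := by
  have hmemT : ∀ φ, φ ∈ T ↔ Entails X Φ T φ := fun φ => by
    conv_lhs => rw [hT]
    exact Iff.rfl
  refine ⟨?_, ?_⟩
  · intro i
    have := h.1 i
    rw [ground_iff] at this ⊢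
    intro x hx
    rw [show (sub β' a).args i = (a.args i).subst β' from rfl,
      subst_hasVar _ _ (assoc_ground hβ')] at hx
    apply this x
    rw [show (sub β a).args i = (a.args i).subst β from rfl,
      subst_hasVar _ _ (assoc_ground hβ)]
    exact ⟨hx.1, (assoc_none hβ x).2 ((assoc_none hβ' x).1 hx.2)⟩
  · rw [hmemT]
    intro v hv C
    have h1 : Sat X v T (sub β a).toFormula C := (hmemT _).1 h.2 v hv C
    have : ∀ i, ((a.args i).subst β).eval v C = ((a.args i).subst β').eval v C := by
      intro i
      rw [eval_subst, eval_subst]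
      congr 1
      funext x
      cases hx : β x with
      | none => rw [(assoc_none hβ' x).2 ((assoc_none hβ x).1 hx)]
      | some s =>
        cases hx' : β' x with
        | none => rw [(assoc_none hβ x).2 ((assoc_none hβ' x).1 hx')] at hx; cases hx
        | some s' =>
          simp only [Option.getD]
          obtain ⟨g, e⟩ := (hβ x).2 s hx
          obtain ⟨g', e'⟩ := (hβ' x).2 s' hx'
          by_cases hne : s = s'
          · rw [hne]
          · by_cases hm : Formula.eq s s' ∈ T
            · exact (hmemT _).1 hm v hv C
            · exact absurd (e.trans e'.symm) (hu s s' (ground_isNameOf _ hfull _ g)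
                (ground_isNameOf _ hfull _ g') hne hm)
    change v.interpP a.p (fun i => ((a.args i).subst β').eval v C)
    simp only [← this]
    exact h1

theorem bT_cong (X X' : Sem) (Φ T : Set (Formula S)) (hT : StableExp X Φ T) (P : Program S)
    (hfull : ∀ f, f ∈ progFuncs P) (w : Interp S) (hu : UNASat w T P) (B : ℕ → w.U)
    (β : ℕ → Option (Term S)) (hβ : Assoc w B β) (a : PAtom S) (hg : (sub β a).isGround) :
    bT X' w T a B ↔ (sub β a).toFormula ∈ T := by
  cases X'
  · rw [bT_any]
    constructor
    · rintro ⟨β', h1, h2⟩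
      exact (cong_names X Φ T hT P hfull w hu B β' β h1 hβ a h2).2
    · exact fun h => ⟨β, hβ, hg, h⟩
  · rw [bT_all]
    constructor
    · exact fun h => (h β hβ).2
    · exact fun h β' h' => cong_names X Φ T hT P hfull w hu B β β' hβ h' a ⟨hg, h⟩

/-! ### Ground instances -/

theorem aT_sub {w : Interp S} {B : ℕ → w.U} {β : ℕ → Option (Term S)} (h : Assoc w B β)
    (a : PAtom S) : aT w (sub β a) B ↔ aT w a B := by
  unfold aT
  simp only [sub, assoc_eval h]

theorem aT_ground (w : Interp S) (a : PAtom S) (ha : a.isGround) (B : ℕ → w.U) :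
    aT w a B ↔ w.interpP a.p (fun i => Term.evalG w (a.args i)) := by
  unfold aT
  simp only [fun i => eval_ground w (a.args i) (ha i) B]

/-- propositional reading of a ground rule -/
def GSat (A : PAtom S → Prop) (Γ : Set (Formula S)) (kp kh : Prop) (r : Rule S) : Prop :=
  (∀ b ∈ r.pos, A b ∧ (kp → b.toFormula ∈ Γ)) → (∀ c ∈ r.neg, ¬ c.toFormula ∈ Γ) →
    ∀ h ∈ r.head, A h ∧ (kh → h.toFormula ∈ Γ)

def gA (w : Interp S) (a : PAtom S) : Prop := w.interpP a.p (fun i => Term.evalG w (a.args i))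

theorem GSat_congr (A A' : PAtom S → Prop) (Γ : Set (Formula S)) (kp kh : Prop) (r : Rule S)
    (h : ∀ a ∈ r.atoms, A a ↔ A' a) (hs : GSat A Γ kp kh r) : GSat A' Γ kp kh r := by
  intro h1 h2 c hc
  have := hs (fun b hb => ⟨(h b (by simp [Rule.atoms, hb])).2 (h1 b hb).1, (h1 b hb).2⟩) h2 c hc
  exact ⟨(h c (by simp [Rule.atoms, hc])).1 this.1, this.2⟩

theorem RSat_ground (X : Sem) (w : Interp S) (Γ : Set (Formula S)) (kp kh : Prop) (r : Rule S)
    (hr : ∀ a ∈ r.atoms, a.isGround) (B : ℕ → w.U) :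
    RSat X w Γ kp kh r B ↔ GSat (gA w) Γ kp kh r := by
  have ha : ∀ a ∈ r.atoms, (aT w a B ↔ gA w a) := fun a h => aT_ground w a (hr a h) B
  have hb : ∀ a ∈ r.atoms, (bT X w Γ a B ↔ a.toFormula ∈ Γ) :=
    fun a h => bT_ground X w Γ a B (hr a h)
  have hp : ∀ a ∈ r.pos, a ∈ r.atoms := fun a h => by simp [Rule.atoms, h]
  have hn : ∀ a ∈ r.neg, a ∈ r.atoms := fun a h => by simp [Rule.atoms, h]
  have hh : ∀ a ∈ r.head, a ∈ r.atoms := fun a h => by simp [Rule.atoms, h]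
  unfold RSat GSat
  refine imp_congr ?_ (imp_congr ?_ ?_)
  · refine forall_congr' fun a => forall_congr' fun h => ?_
    rw [ha a (hp a h), hb a (hp a h)]
  · refine forall_congr' fun a => forall_congr' fun h => ?_
    rw [hb a (hn a h)]
  · refine forall_congr' fun a => forall_congr' fun h => ?_
    rw [ha a (hh a h), hb a (hh a h)]

theorem substA_eq (σ : ℕ → Term S) (β : ℕ → Option (Term S)) (a : PAtom S)
    (h : ∀ x, PAtom.hasVar x a → β x = some (σ x)) : PAtom.substA σ a = sub β a := by
  unfold PAtom.substA sub
  congr 1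
  funext i
  exact subst_congr _ _ _ (fun x hx => (h x ⟨i, hx⟩).symm)

theorem substA_ground (σ : ℕ → Term S) (a : PAtom S)
    (h : ∀ x, PAtom.hasVar x a → (σ x).isGround) : (PAtom.substA σ a).isGround := by
  have := substA_eq σ (fun x => open Classical in
    if PAtom.hasVar x a then some (σ x) else none) a (fun x hx => by simp [hx])
  rw [this]
  intro i
  rw [ground_iff]
  intro x hx
  rw [show (sub _ a).args i = (a.args i).subst _ from rfl, subst_hasVar] at hx
  · have h2 : PAtom.hasVar x a := ⟨i, hx.1⟩
    simp [h2] at hx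
  · intro y s hs
    by_cases hy : PAtom.hasVar y a
    · simp only [hy, if_true, Option.some.injEq] at hs
      exact hs ▸ h y hy
    · simp [hy] at hs

theorem applySubst_ground (σ : ℕ → Term S) (r : Rule S)
    (h : ∀ x, r.hasVar x → (σ x).isGround) :
    ∀ a ∈ (Rule.applySubst σ r).atoms, a.isGround := by
  intro a ha
  simp only [Rule.atoms, Rule.applySubst, ← List.map_append, List.mem_map] at ha
  obtain ⟨b, hb, rfl⟩ := ha
  exact substA_ground σ b (fun x hx => h x ⟨b, hb, hx⟩)

/-- A rule at an assignment versus the matching ground instance. -/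
theorem rule_to_inst (X : Sem) (w : Interp S) (Γ : Set (Formula S)) (kp kh : Prop) (r : Rule S)
    (B : ℕ → w.U) (β : ℕ → Option (Term S)) (σ : ℕ → Term S) (hβ : Assoc w B β)
    (hσ : ∀ x, r.hasVar x → β x = some (σ x))
    (h1 : ∀ a ∈ r.atoms, bT X w Γ a B → (sub β a).toFormula ∈ Γ)
    (h2 : kp → ∀ a ∈ r.atoms, (sub β a).toFormula ∈ Γ → bT X w Γ a B)
    (hr : RSat X w Γ kp kh r B) : GSat (gA w) Γ kp kh (Rule.applySubst σ r) := by
  have hg : ∀ a ∈ r.atoms, (PAtom.substA σ a).isGround := fun a ha =>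
    substA_ground σ a (fun x hx => assoc_ground hβ x _ (hσ x ⟨a, ha, hx⟩))
  have he : ∀ a ∈ r.atoms, PAtom.substA σ a = sub β a := fun a ha =>
    substA_eq σ β a (fun x hx => hσ x ⟨a, ha, hx⟩)
  have hA : ∀ a ∈ r.atoms, (gA w (PAtom.substA σ a) ↔ aT w a B) := fun a ha => by
    rw [← aT_sub hβ, ← he a ha, aT_ground w _ (hg a ha)]
    exact Iff.rfl
  have hp : ∀ a ∈ r.pos, a ∈ r.atoms := fun a h => by simp [Rule.atoms, h]
  have hn : ∀ a ∈ r.neg, a ∈ r.atoms := fun a h => by simp [Rule.atoms, h]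
  have hh : ∀ a ∈ r.head, a ∈ r.atoms := fun a h => by simp [Rule.atoms, h]
  unfold GSat
  simp only [Rule.applySubst, List.forall_mem_map]
  intro hpos hneg c hc
  have := hr (fun b hb => ⟨(hA b (hp b hb)).1 (hpos b hb).1, fun k =>
      h2 k b (hp b hb) (he b (hp b hb) ▸ (hpos b hb).2 k)⟩)
    (fun d hd hbd => hneg d hd (by rw [he d (hn d hd)]; exact h1 d (hn d hd) hbd)) c hc
  exact ⟨(hA c (hh c hc)).2 this.1, fun k => by
    rw [he c (hh c hc)]; exact h1 c (hh c hc) (this.2 k)⟩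

theorem inst_to_rule (X : Sem) (w : Interp S) (Γ : Set (Formula S)) (kp kh : Prop) (r : Rule S)
    (B : ℕ → w.U) (β : ℕ → Option (Term S)) (σ : ℕ → Term S) (hβ : Assoc w B β)
    (hσ : ∀ x, r.hasVar x → β x = some (σ x))
    (h1 : ∀ a ∈ r.atoms, (bT X w Γ a B ↔ (sub β a).toFormula ∈ Γ))
    (hr : GSat (gA w) Γ kp kh (Rule.applySubst σ r)) : RSat X w Γ kp kh r B := by
  have hg : ∀ a ∈ r.atoms, (PAtom.substA σ a).isGround := fun a ha =>
    substA_ground σ a (fun x hx => assoc_ground hβ x _ (hσ x ⟨a, ha, hx⟩))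
  have he : ∀ a ∈ r.atoms, PAtom.substA σ a = sub β a := fun a ha =>
    substA_eq σ β a (fun x hx => hσ x ⟨a, ha, hx⟩)
  have hA : ∀ a ∈ r.atoms, (gA w (PAtom.substA σ a) ↔ aT w a B) := fun a ha => by
    rw [← aT_sub hβ, ← he a ha, aT_ground w _ (hg a ha)]
    exact Iff.rfl
  have hp : ∀ a ∈ r.pos, a ∈ r.atoms := fun a h => by simp [Rule.atoms, h]
  have hn : ∀ a ∈ r.neg, a ∈ r.atoms := fun a h => by simp [Rule.atoms, h]
  have hh : ∀ a ∈ r.head, a ∈ r.atoms := fun a h => by simp [Rule.atoms, h]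
  unfold GSat at hr
  simp only [Rule.applySubst, List.forall_mem_map] at hr
  intro hpos hneg c hc
  have := hr (fun b hb => ⟨(hA b (hp b hb)).2 (hpos b hb).1, fun k => by
      rw [he b (hp b hb)]; exact (h1 b (hp b hb)).1 ((hpos b hb).2 k)⟩)
    (fun d hd hbd => hneg d hd ((h1 d (hn d hd)).2 (by rw [← he d (hn d hd)]; exact hbd))) c hc
  exact ⟨(hA c (hh c hc)).1 this.1, fun k => (h1 c (hh c hc)).2 (by
    rw [← he c (hh c hc)]; exact this.2 k)⟩

/-! ### Herbrand unfolding -/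

def herb (w : Interp S) (hne : Nonempty {t : Term S // t.isGround}) : Interp S where
  U := {t : Term S // t.isGround}
  nonempty := hne
  interpF f ts := ⟨Term.func f (fun i => (ts i).1), fun i => (ts i).2⟩
  interpP p ts := w.interpP p (fun i => Term.evalG w (ts i).1)

theorem herb_eval (w : Interp S) (hne : Nonempty {t : Term S // t.isGround})
    (B : ℕ → (herb w hne).U) (t : Term S) :
    t.isGround → (t.eval (herb w hne) B : {t : Term S // t.isGround}).1 = t := by
  induction t with
  | var y => intro h; exact h.elim
  | func f ts ih =>
    intro h
    change Term.func f _ = _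
    congr 1
    funext i
    exact ih i (h i)

theorem exists_unfold (P : Program S) (hgood : goodSig P) (w : Interp S) :
    ∃ v : Interp S,
      (∀ t₁ t₂ : Term S, t₁.isGround → t₂.isGround → Term.evalG v t₁ = Term.evalG v t₂ → t₁ = t₂) ∧
      (∀ r ∈ P, ∀ x, r.hasVar x → ∀ k : v.U, IsNamed v k) ∧
      (∀ a : PAtom S, a.isGround → (gA v a ↔ gA w a)) := by
  by_cases hne : Nonempty {t : Term S // t.isGround}
  · refine ⟨herb w hne, ?_, ?_, ?_⟩
    · intro t₁ t₂ h₁ h₂ h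
      have e1 := herb_eval w hne (fun _ => (herb w hne).dflt) t₁ h₁
      have e2 := herb_eval w hne (fun _ => (herb w hne).dflt) t₂ h₂
      rw [← e1, ← e2]
      exact congrArg Subtype.val h
    · intro r _ x _ k
      exact ⟨k.1, k.2, Subtype.ext (herb_eval w hne _ k.1 k.2)⟩
    · intro a ha
      unfold gA
      change w.interpP a.p (fun i => Term.evalG w
        (Term.evalG (herb w hne) (a.args i) : {t : Term S // t.isGround}).1) ↔ _
      have : ∀ i, (Term.evalG (herb w hne) (a.args i) : {t : Term S // t.isGround}).1 = a.args i :=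
        fun i => herb_eval w hne _ _ (ha i)
      simp only [this]
  · refine ⟨w, ?_, ?_, fun _ _ => Iff.rfl⟩
    · intro t₁ _ h₁
      exact absurd ⟨⟨t₁, h₁⟩⟩ hne
    · rintro r hr x ⟨a, ha, i, hi⟩ k
      exfalso
      obtain ⟨f, _, hf⟩ := hgood ⟨a.p, ⟨r, hr, a, ha, rfl⟩, by have := i.2; omega⟩
      refine hne ⟨⟨Term.func f (fun _ => Term.var 0), fun j => ?_⟩⟩
      have := j.2
      omega

/-! ### Main argument -/

def Char (X : Sem) (u kp kh : Prop) (Q : Program S) (Φ : Set (Formula S)) : Prop :=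
  ∀ (w : Interp S) (T : Set (Formula S)), ModelsT X w T Φ ↔
    (∀ r ∈ Q, ∀ B, RSat X w T kp kh r B) ∧ (u → UNASat w T Q)

theorem char_oga {X : Sem} {u kp kh : Prop} {Q : Program S} {Φ : Set (Formula S)}
    (hc : Char X u kp kh Q Φ) (w : Interp S) (T' T : Set (Formula S)) (h : ogaOf T' = ogaOf T) :
    ModelsT X w T' Φ ↔ ModelsT X w T Φ := by
  rw [hc w T', hc w T]
  have hb : ∀ (a : PAtom S) (B : ℕ → w.U), bT X w T' a B ↔ bT X w T a B :=
    fun a B => bT_congr X w T' T a B (oga_atom h)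
  refine and_congr ?_ (imp_congr Iff.rfl ?_)
  · simp only [RSat, hb]
  · refine forall_congr' fun t₁ => forall_congr' fun t₂ => forall_congr' fun n₁ =>
      forall_congr' fun n₂ => ?_
    rw [oga_eq h t₁ t₂ (isNameOf_ground _ _ n₁) (isNameOf_ground _ _ n₂)]

theorem isNameOf_full {P : Program S} (hfull : fullSig P) (t : Term S) (h : t.isGround) :
    t.isNameOf (progFuncs P) := ground_isNameOf _ hfull.1 t h

theorem entails_iff (X : Sem) (u kp kh : Prop) (hu : u ∨ (X = Sem.all ∧ ¬ kp)) (P : Program S)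
    (hfull : fullSig P) (hgood : goodSig P) (Φ₁ Φ₂ : Set (Formula S))
    (c₁ : Char X u kp kh P Φ₁) (c₂ : Char X u kp kh (grP P) Φ₂) (Φ T : Set (Formula S))
    (hT : StableExp X Φ T) (φ : Formula S) (hg : φ.isGround) (ha : φ.isAtomic) :
    Entails X Φ₁ T φ ↔ Entails X Φ₂ T φ := by
  constructor
  · intro he w hw B
    obtain ⟨v, hinj, hnam, hag⟩ := exists_unfold P hgood w
    have hv : ModelsT X v T Φ₁ := by
      rw [c₁]
      refine ⟨?_, ?_⟩
      · intro r hr C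
        obtain ⟨β, hβ, _⟩ := exists_assoc v C Term.var
        have huniq : ∀ β', Assoc v C β' → β' = β := by
          intro β' hβ'
          funext x
          cases hx : β x with
          | none => exact (assoc_none hβ' x).2 ((assoc_none hβ x).1 hx)
          | some s =>
            cases hx' : β' x with
            | none => rw [(assoc_none hβ x).2 ((assoc_none hβ' x).1 hx')] at hx; cases hx
            | some s' =>
              obtain ⟨g, e⟩ := (hβ x).2 s hx
              obtain ⟨g', e'⟩ := (hβ' x).2 s' hx'
              rw [hinj s' s g' g (e'.trans e.symm)]
        have hσ : ∀ x, r.hasVar x → β x = some ((β x).getD (Term.var x)) := by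
          intro x hx
          have := (hβ x).1 (hnam r hr x hx _)
          obtain ⟨s, hs⟩ := Option.isSome_iff_exists.1 this
          rw [hs]
          rfl
        have hσg : ∀ x, r.hasVar x → ((β x).getD (Term.var x)).isGround :=
          fun x hx => assoc_ground hβ x _ (hσ x hx)
        have hin : Rule.applySubst (fun x => (β x).getD (Term.var x)) r ∈ grP P :=
          ⟨r, hr, _, fun x hx => isNameOf_full hfull _ (hσg x hx), rfl⟩
        have hgr := applySubst_ground (fun x => (β x).getD (Term.var x)) r hσg
        have hG := (RSat_ground X w T kp kh _ hgr B).1 (((c₂ w T).1 hw).1 _ hin B)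
        have hG' := GSat_congr (gA w) (gA v) T kp kh _
          (fun a ha => (hag a (hgr a ha)).symm) hG
        refine inst_to_rule X v T kp kh r C β (fun x => (β x).getD (Term.var x)) hβ hσ ?_ hG'
        intro a har
        have hga : (sub β a).isGround := by
          rw [← substA_eq (fun x => (β x).getD (Term.var x)) β a (fun x hx => hσ x ⟨a, har, hx⟩)]
          exact substA_ground _ a (fun x hx => hσg x ⟨a, har, hx⟩)
        cases X
        · rw [bT_any]
          constructor
          · rintro ⟨β', h1, h2⟩
            rw [huniq β' h1] at h2
            exact h2.2
          · exact fun h => ⟨β, hβ, hga, h⟩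
        · rw [bT_all]
          constructor
          · exact fun h => (h β hβ).2
          · intro h β' h'
            rw [huniq β' h']
            exact ⟨hga, h⟩
      · intro _ t₁ t₂ n₁ n₂ hne _ h
        exact hne (hinj t₁ t₂ (isNameOf_ground _ _ n₁) (isNameOf_ground _ _ n₂) h)
    have hs := he v hv (fun _ => v.dflt)
    cases φ with
    | atom p ts =>
      have hgd : (⟨p, ts⟩ : PAtom S).isGround := hg
      exact (aT_ground w ⟨p, ts⟩ hgd B).2
        ((hag _ hgd).1 ((aT_ground v ⟨p, ts⟩ hgd _).1 hs))
    | eq t₁ t₂ =>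
      have : t₁ = t₂ := hinj t₁ t₂ hg.1 hg.2 hs
      change t₁.eval w B = t₂.eval w B
      rw [this]
    | not _ => exact ha.elim
    | and _ _ => exact ha.elim
    | ex _ _ => exact ha.elim
    | box _ => exact ha.elim
  · intro he w hw
    refine he w ?_
    obtain ⟨hR, hU⟩ := (c₁ w T).1 hw
    rw [c₂]
    refine ⟨?_, ?_⟩
    · rintro r' ⟨r, hr, σ, hσ, rfl⟩ C
      have hσg : ∀ x, r.hasVar x → (σ x).isGround := fun x hx => isNameOf_ground _ _ (hσ x hx)
      rw [RSat_ground X w T kp kh _ (applySubst_ground σ r hσg)]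
      obtain ⟨β, hβ, hβσ⟩ := exists_assoc w (fun x => Term.evalG w (σ x)) σ
      have hβσ' : ∀ x, r.hasVar x → β x = some (σ x) := fun x hx => hβσ x (hσg x hx) rfl
      have hga : ∀ a ∈ r.atoms, (sub β a).isGround := by
        intro a har
        rw [← substA_eq σ β a (fun x hx => hβσ' x ⟨a, har, hx⟩)]
        exact substA_ground _ a (fun x hx => hσg x ⟨a, har, hx⟩)
      refine rule_to_inst X w T kp kh r _ β σ hβ hβσ' ?_ ?_ (hR r hr _)
      · intro a har hb
        rcases hu with hu | ⟨rfl, _⟩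
        · exact (bT_cong X X Φ T hT P hfull.1 w (hU hu) _ β hβ a (hga a har)).1 hb
        · exact ((bT_all w T a _).1 hb β hβ).2
      · intro k a har hb
        rcases hu with hu | ⟨_, hk⟩
        · exact (bT_cong X X Φ T hT P hfull.1 w (hU hu) _ β hβ a (hga a har)).2 hb
        · exact absurd k hk
    · intro h t₁ t₂ n₁ n₂
      exact hU h t₁ t₂ (isNameOf_full hfull _ (isNameOf_ground _ _ n₁))
        (isNameOf_full hfull _ (isNameOf_ground _ _ n₂))

theorem core (X : Sem) (u kp kh : Prop) (hu : u ∨ (X = Sem.all ∧ ¬ kp)) (P : Program S)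
    (hfull : fullSig P) (hgood : goodSig P) (Φ₁ Φ₂ : Set (Formula S))
    (c₁ : Char X u kp kh P Φ₁) (c₂ : Char X u kp kh (grP P) Φ₂) :
    (∀ T, StableExp X Φ₁ T → ∃ T', StableExp X Φ₂ T' ∧ ogaOf T' = ogaOf T) ∧
    (∀ T', StableExp X Φ₂ T' → ∃ T, StableExp X Φ₁ T ∧ ogaOf T' = ogaOf T) := by
  constructor
  · intro T hT
    exact transfer X Φ₁ Φ₂ T hT (fun w T' h => char_oga c₂ w T' T h)
      (entails_iff X u kp kh hu P hfull hgood Φ₁ Φ₂ c₁ c₂ Φ₁ T hT)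
  · intro T' hT'
    obtain ⟨T, h1, h2⟩ := transfer X Φ₂ Φ₁ T' hT' (fun w T h => char_oga c₁ w T T' h)
      (fun φ hg ha =>
        (entails_iff X u kp kh hu P hfull hgood Φ₁ Φ₂ c₁ c₂ Φ₂ T' hT' φ hg ha).symm)
    exact ⟨T, h1, h2.symm⟩

theorem models_ruleEmb (X : Sem) {emb : Rule S → Formula S} {kp kh : Prop}
    (he : EmbOK emb kp kh) (Q : Program S) (hQ : progNormal Q) (w : Interp S)
    (T : Set (Formula S)) :
    ModelsT X w T (ruleEmb emb Q) ↔ ∀ r ∈ Q, ∀ B, RSat X w T kp kh r B := by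
  constructor
  · intro h r hr
    exact (he X w T r (hQ r hr)).1 (h _ ⟨r, hr, rfl⟩)
  · rintro h φ ⟨r, hr, rfl⟩
    exact (he X w T r (hQ r hr)).2 (h r hr)

theorem char_una (X : Sem) {emb : Rule S → Formula S} {kp kh : Prop}
    (he : EmbOK emb kp kh) (Q : Program S) (hQ : progNormal Q) :
    Char X True kp kh Q (ruleEmb emb Q ∪ UNAax Q) := by
  intro w T
  rw [← models_ruleEmb X he Q hQ w T, true_imp_iff, ← models_UNA X w T Q]
  constructor
  · intro h
    exact ⟨fun φ hφ => h φ (Or.inl hφ), fun φ hφ => h φ (Or.inr hφ)⟩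
  · rintro ⟨h1, h2⟩ φ (hφ | hφ)
    · exact h1 φ hφ
    · exact h2 φ hφ

theorem char_minus (X : Sem) {emb : Rule S → Formula S} {kp kh : Prop}
    (he : EmbOK emb kp kh) (Q : Program S) (hQ : progNormal Q) :
    Char X False kp kh Q (ruleEmb emb Q) := by
  intro w T
  rw [← models_ruleEmb X he Q hQ w T, false_imp_iff, and_true]

theorem gr_normal (P : Program S) (hP : progNormal P) : progNormal (grP P) := by
  rintro r' ⟨r, hr, σ, _, rfl⟩
  have := hP r hr
  unfold Rule.isNormal at this ⊢
  simpa [Rule.applySubst] using this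

end Aux

/-- Reduction lemma: `τ_χ(P)` has a stableˣ expansion `T` iff
`τ_χ(gr(P))` has a stableˣ expansion `T'` with `T'_oga = T_oga`; the same holds
for `τ⁻_HP` and stableᴬ expansions. -/
theorem stmt2 {S : Sig} (X : Sem) (P : Program S)
    (hwf : progWf P) (hnormal : progNormal P) (hfull : fullSig P) (hgood : goodSig P)
    (τ : Program S → Set (Formula S))
    (hτ : τ = tauHP ∨ τ = tauEB ∨ τ = tauEH) :
    ((∀ T, StableExp X (τ P) T →
        ∃ T', StableExp X (τ (grP P)) T' ∧ ogaOf T' = ogaOf T) ∧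
     (∀ T', StableExp X (τ (grP P)) T' →
        ∃ T, StableExp X (τ P) T ∧ ogaOf T' = ogaOf T)) ∧
    ((∀ T, StableExp Sem.all (tauHPminus P) T →
        ∃ T', StableExp Sem.all (tauHPminus (grP P)) T' ∧ ogaOf T' = ogaOf T) ∧
     (∀ T', StableExp Sem.all (tauHPminus (grP P)) T' →
        ∃ T, StableExp Sem.all (tauHPminus P) T ∧ ogaOf T' = ogaOf T)) := by
  have hg := Aux.gr_normal P hnormal
  refine ⟨?_, ?_⟩
  · rcases hτ with rfl | rfl | rfl
    · exact Aux.core X True False False (Or.inl trivial) P hfull hgood _ _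
        (Aux.char_una X Aux.embOK_HP P hnormal) (Aux.char_una X Aux.embOK_HP _ hg)
    · exact Aux.core X True True False (Or.inl trivial) P hfull hgood _ _
        (Aux.char_una X Aux.embOK_EB P hnormal) (Aux.char_una X Aux.embOK_EB _ hg)
    · exact Aux.core X True True True (Or.inl trivial) P hfull hgood _ _
        (Aux.char_una X Aux.embOK_EH P hnormal) (Aux.char_una X Aux.embOK_EH _ hg)
  · exact Aux.core Sem.all False False False (Or.inr ⟨rfl, id⟩) P hfull hgood _ _
      (Aux.char_minus Sem.all Aux.embOK_HP P hnormal) (Aux.char_minus Sem.all Aux.embOK_HP _ hg)
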